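/- (Corollary: exact dual reformulation for the exponential-gamma model.) Let αₙ, βₙ > 0, let f : [0, ∞) → ℝ be bounded and measurable, and let ε > log αₙ − ψ(αₙ), where ψ is the digamma function. Then sup over probability measures Q on [0, ∞) satisfying ∫ KL(Q ‖ Exp(θ)) dGamma(αₙ, βₙ)(θ) ≤ ε of ∫ f dQ equals inf over γ > 0 of γ(ε − (log αₙ − ψ(αₙ))) + γ log ∫ exp(f(ξ)/γ) dExp(αₙ/βₙ)(ξ). -/

import Mathlib

open MeasureTheory ProbabilityTheory Real
open scoped ENNReal NNReal Classical

/-- Kullback-Leibler divergence: `∫ log (dQ/dP) dQ` when `Q ≪ P` and the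
log-likelihood ratio is integrable, `+∞` otherwise. -/
noncomputable def klDiv {Ω : Type*} [MeasurableSpace Ω] (Q P : Measure Ω) : ℝ≥0∞ :=
  if Q ≪ P ∧ Integrable (fun x => Real.log (Q.rnDeriv P x).toReal) Q
  then ENNReal.ofReal (∫ x, Real.log (Q.rnDeriv P x).toReal ∂Q)
  else ⊤

/-- The digamma function: derivative of `log ∘ Γ`. -/
noncomputable def digamma (x : ℝ) : ℝ := deriv (fun y => Real.log (Real.Gamma y)) x

/-! The log-likelihood of the gamma model is affine in `θ` and `log θ`, so averaging
`KL(Q ‖ Gamma(k, θ))` over the posterior `θ ~ Gamma(α, β)` only involves the posterior means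
`α / β` and `ψ(α) - log β`. The average equals `KL(Q ‖ Gamma(k, α / β)) + k (log α - ψ(α))`, and the
ambiguity set is a single KL ball around `Gamma(k, α / β)`.

Over a KL ball of radius `δ` around `ν`, the Donsker–Varadhan inequality bounds `∫ f dQ` by the
dual objective `γ δ + γ log ∫ exp(f / γ) dν`. The exponential tilts of `ν` by `t f` close the gap:
their divergence from `ν` is continuous in `t` and starts at `0`, so either it reaches `δ` at some
`t`, where `γ = 1 / t` is dual optimal, or it stays below `δ` and letting `t → ∞` suffices.
-/

section GammaMeasure

variable {a r s t : ℝ}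

lemma measurable_gammaPDF (a r : ℝ) : Measurable (gammaPDF a r) :=
  (measurable_gammaPDFReal a r).ennreal_ofReal

lemma integral_gammaMeasure {E : Type*} [NormedAddCommGroup E] [NormedSpace ℝ E]
    (ha : 0 < a) (hr : 0 < r) (g : ℝ → E) :
    ∫ x, g x ∂gammaMeasure a r = ∫ x, gammaPDFReal a r x • g x := by
  rw [gammaMeasure, integral_withDensity_eq_integral_toReal_smul (measurable_gammaPDF a r)
    (by simp [gammaPDF])]
  simp only [gammaPDF, ENNReal.toReal_ofReal (gammaPDFReal_nonneg ha hr _)]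

lemma integral_gammaPDFReal (ha : 0 < a) (hr : 0 < r) : ∫ x, gammaPDFReal a r x = 1 := by
  have := isProbabilityMeasure_gammaMeasure ha hr
  simpa using (integral_gammaMeasure ha hr fun _ ↦ (1 : ℝ)).symm

lemma gammaMeasure_ae_pos (a r : ℝ) : ∀ᵐ x ∂gammaMeasure a r, 0 < x := by
  rw [gammaMeasure, ae_withDensity_iff (measurable_gammaPDF a r)]
  filter_upwards [Measure.ae_ne volume 0] with x hx hpdf
  exact hx.lt_or_gt.resolve_left fun hneg ↦ hpdf (gammaPDF_of_neg hneg)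

lemma gammaPDFReal_mul_rpow_mul_exp (ha : 0 < a) (hr : 0 < r) (hat : 0 < a + t) (hs : s < r)
    {x : ℝ} (hx : x ≠ 0) :
    gammaPDFReal a r x * (x ^ t * exp (s * x)) =
      r ^ a * Gamma (a + t) / (Gamma a * (r - s) ^ (a + t)) * gammaPDFReal (a + t) (r - s) x := by
  rcases hx.lt_or_gt with hneg | hpos
  · simp [gammaPDFReal, hneg.not_ge]
  · have hrate : -((r - s) * x) = -(r * x) + s * x := by ring
    have hshape : a + t - 1 = (a - 1) + t := by ring
    have := Gamma_pos_of_pos hat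
    have hrs := rpow_pos_of_pos (sub_pos.2 hs) (a + t)
    simp only [gammaPDFReal, if_pos hpos.le, hrate, hshape, exp_add, rpow_add hpos]
    field_simp

lemma integral_rpow_mul_exp_gammaMeasure (ha : 0 < a) (hr : 0 < r) (hat : 0 < a + t)
    (hs : s < r) :
    ∫ x, x ^ t * exp (s * x) ∂gammaMeasure a r =
      r ^ a * Gamma (a + t) / (Gamma a * (r - s) ^ (a + t)) := by
  have hpdf : ∀ᵐ x : ℝ, gammaPDFReal a r x • (x ^ t * exp (s * x)) =
      r ^ a * Gamma (a + t) / (Gamma a * (r - s) ^ (a + t)) * gammaPDFReal (a + t) (r - s) x := by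
    filter_upwards [Measure.ae_ne volume 0] with x hx
    exact gammaPDFReal_mul_rpow_mul_exp ha hr hat hs hx
  rw [integral_gammaMeasure ha hr, integral_congr_ae hpdf, integral_const_mul,
    integral_gammaPDFReal hat (sub_pos.2 hs), mul_one]

lemma integrable_rpow_mul_exp_gammaMeasure (ha : 0 < a) (hr : 0 < r) (hat : 0 < a + t)
    (hs : s < r) : Integrable (fun x ↦ x ^ t * exp (s * x)) (gammaMeasure a r) := by
  refine .of_integral_ne_zero ?_
  have := Gamma_pos_of_pos hat
  have := rpow_pos_of_pos (sub_pos.2 hs) (a + t)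
  rw [integral_rpow_mul_exp_gammaMeasure ha hr hat hs]
  positivity

lemma integral_id_gammaMeasure (ha : 0 < a) (hr : 0 < r) :
    ∫ x, x ∂gammaMeasure a r = a / r := by
  have h := integral_rpow_mul_exp_gammaMeasure (s := 0) (t := 1) ha hr (by positivity) hr
  simp only [rpow_one, zero_mul, exp_zero, mul_one, sub_zero, rpow_add hr,
    Gamma_add_one ha.ne'] at h
  rw [h]
  field_simp

lemma integrable_id_gammaMeasure (ha : 0 < a) (hr : 0 < r) :
    Integrable (fun x ↦ x) (gammaMeasure a r) := by
  simpa using integrable_rpow_mul_exp_gammaMeasure (s := 0) (t := 1) ha hr (by positivity) hr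

lemma integral_exp_mul_gammaMeasure (ha : 0 < a) (hr : 0 < r) (hs : s < r) :
    ∫ x, exp (s * x) ∂gammaMeasure a r = (r / (r - s)) ^ a := by
  have hΓ := Gamma_pos_of_pos ha
  have h := integral_rpow_mul_exp_gammaMeasure (t := 0) ha hr (by simpa) hs
  simp only [rpow_zero, one_mul, add_zero] at h
  rw [h, div_rpow hr.le (sub_pos.2 hs).le, mul_comm, mul_div_mul_left _ _ hΓ.ne']

lemma integrable_exp_mul_gammaMeasure (ha : 0 < a) (hr : 0 < r) (hs : s < r) :
    Integrable (fun x ↦ exp (s * x)) (gammaMeasure a r) := by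
  simpa using integrable_rpow_mul_exp_gammaMeasure (t := 0) ha hr (by simpa) hs

lemma zero_mem_interior_integrableExpSet_id_gammaMeasure (ha : 0 < a) (hr : 0 < r) :
    0 ∈ interior (integrableExpSet (fun x ↦ x) (gammaMeasure a r)) :=
  mem_interior.2 ⟨Set.Iio r, fun _ hs ↦ integrable_exp_mul_gammaMeasure ha hr hs, isOpen_Iio, hr⟩

lemma gammaMeasure_tilted_mul (ha : 0 < a) (hr : 0 < r) (hs : s < r) :
    (gammaMeasure a r).tilted (fun x ↦ s * x) = gammaMeasure a (r - s) := by
  rw [Measure.tilted, integral_exp_mul_gammaMeasure ha hr hs, gammaMeasure,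
    ← withDensity_mul _ (measurable_gammaPDF a r) (by fun_prop), gammaMeasure]
  refine withDensity_congr_ae ?_
  filter_upwards [Measure.ae_ne volume 0] with x hx
  have h := gammaPDFReal_mul_rpow_mul_exp (t := 0) ha hr (by simpa) hs hx
  have hrs := sub_pos.2 hs
  simp only [rpow_zero, one_mul, add_zero] at h
  rw [Pi.mul_apply, gammaPDF, gammaPDF, ← ENNReal.ofReal_mul (gammaPDFReal_nonneg ha hr x),
    mul_div_assoc', h, div_rpow hr.le hrs.le]
  congr 1
  field_simp

lemma exp_mul_log_ae_eq_rpow_gammaMeasure (a r t : ℝ) :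
    (fun x ↦ exp (t * log x)) =ᵐ[gammaMeasure a r] fun x ↦ x ^ t := by
  filter_upwards [gammaMeasure_ae_pos a r] with x hx
  rw [rpow_def_of_pos hx, mul_comm]

lemma zero_mem_interior_integrableExpSet_log_gammaMeasure (ha : 0 < a) (hr : 0 < r) :
    0 ∈ interior (integrableExpSet log (gammaMeasure a r)) := by
  refine mem_interior.2 ⟨Set.Ioi (-a), fun t ht ↦ ?_, isOpen_Ioi, neg_lt_zero.2 ha⟩
  refine (integrable_congr (exp_mul_log_ae_eq_rpow_gammaMeasure a r t)).2 ?_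
  simpa using integrable_rpow_mul_exp_gammaMeasure (s := 0) ha hr (neg_lt_iff_pos_add'.1 ht) hr

lemma cgf_log_gammaMeasure (ha : 0 < a) (hr : 0 < r) (hat : 0 < a + t) :
    cgf log (gammaMeasure a r) t = log (Gamma (a + t)) - log (Gamma a) - t * log r := by
  have hΓ := (Gamma_pos_of_pos ha).ne'
  have hΓ' := (Gamma_pos_of_pos hat).ne'
  have hmgf := integral_rpow_mul_exp_gammaMeasure (s := 0) ha hr hat hr
  simp only [zero_mul, exp_zero, mul_one, sub_zero] at hmgf
  rw [cgf, mgf, integral_congr_ae (exp_mul_log_ae_eq_rpow_gammaMeasure a r t), hmgf,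
    log_div (by positivity) (by positivity), log_mul (by positivity) hΓ',
    log_mul hΓ (by positivity), log_rpow hr, log_rpow hr]
  ring

lemma hasDerivAt_log_Gamma (ha : 0 < a) :
    HasDerivAt (fun y ↦ log (Gamma y)) (digamma a) a := by
  have hdiff : DifferentiableAt ℝ Gamma a := differentiableAt_Gamma fun m ↦
    (neg_nonpos.2 m.cast_nonneg |>.trans_lt ha).ne'
  exact (hdiff.log (Gamma_pos_of_pos ha).ne').hasDerivAt

lemma integral_log_gammaMeasure (ha : 0 < a) (hr : 0 < r) :
    ∫ x, log x ∂gammaMeasure a r = digamma a - log r := by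
  have := isProbabilityMeasure_gammaMeasure ha hr
  have hmean := deriv_cgf_zero (zero_mem_interior_integrableExpSet_log_gammaMeasure ha hr)
  simp only [probReal_univ, div_one] at hmean
  have hcgf : cgf log (gammaMeasure a r) =ᶠ[nhds 0]
      fun t ↦ log (Gamma (a + t)) - log (Gamma a) - t * log r := by
    filter_upwards [Ioi_mem_nhds (neg_lt_zero.2 ha)] with t ht
    exact cgf_log_gammaMeasure ha hr (neg_lt_iff_pos_add'.1 ht)
  have hderiv : HasDerivAt (fun t ↦ log (Gamma (a + t)) - log (Gamma a) - t * log r)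
      (digamma a - log r) 0 := by
    have hΓ : HasDerivAt (fun y ↦ log (Gamma y)) (digamma a) (a + 0) := by
      simpa using hasDerivAt_log_Gamma ha
    simpa using ((hΓ.comp_const_add a 0).sub_const (log (Gamma a))).fun_sub
      ((hasDerivAt_id (0 : ℝ)).mul_const (log r))
  rw [← hmean, hcgf.deriv_eq, hderiv.deriv]

lemma integrable_log_gammaMeasure (ha : 0 < a) (hr : 0 < r) :
    Integrable log (gammaMeasure a r) :=
  integrable_of_mem_interior_integrableExpSet
    (zero_mem_interior_integrableExpSet_log_gammaMeasure ha hr)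

-- Integrate `log x ≤ x - 1` under `Gamma(a, a)`, which has mean `1`.
lemma digamma_le_log (ha : 0 < a) : digamma a ≤ log a := by
  have := isProbabilityMeasure_gammaMeasure ha ha
  have hid := integrable_id_gammaMeasure ha ha
  rw [← sub_nonpos, ← integral_log_gammaMeasure ha ha]
  calc ∫ x, log x ∂gammaMeasure a a
      ≤ ∫ x, (x - 1) ∂gammaMeasure a a := by
        refine integral_mono_ae (integrable_log_gammaMeasure ha ha)
          (hid.sub (integrable_const 1)) ?_
        filter_upwards [gammaMeasure_ae_pos a a] with x hx using log_le_sub_one_of_pos hx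
    _ = 0 := by
        rw [integral_sub hid (integrable_const 1), integral_id_gammaMeasure ha ha,
          div_self ha.ne']
        simp

end GammaMeasure

section KLDuality

open InformationTheory hiding klDiv

variable {Ω : Type*} [MeasurableSpace Ω] {μ ν : Measure Ω} {X : Ω → ℝ}

lemma klDiv_eq_informationTheory_klDiv [IsProbabilityMeasure μ] [IsProbabilityMeasure ν] :
    klDiv μ ν = InformationTheory.klDiv μ ν := by
  simp [klDiv, InformationTheory.klDiv_def, llr_def]

-- The Fenchel–Young inequality for `klFun` and its conjugate `y ↦ exp y - 1`.
lemma mul_le_klFun_add_exp_sub_one {p : ℝ} (hp : 0 ≤ p) (y : ℝ) :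
    p * y ≤ klFun p + (exp y - 1) := by
  rcases hp.eq_or_lt with rfl | hpos
  · simpa [klFun_zero] using exp_nonneg y
  · have h := mul_le_mul_of_nonneg_left (add_one_le_exp (y - log p)) hp
    rw [exp_sub, exp_log hpos, mul_div_cancel₀ _ hpos.ne'] at h
    rw [klFun_apply]
    linarith

lemma exists_pos_integrable_exp_mul_abs (h0 : 0 ∈ interior (integrableExpSet X ν)) :
    ∃ t > 0, Integrable (fun ω ↦ exp (t * |X ω|)) ν := by
  obtain ⟨δ, hδ, hball⟩ := Metric.mem_nhds_iff.1 (mem_interior_iff_mem_nhds.1 h0)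
  have hmem : ∀ t, |t| < δ → Integrable (fun ω ↦ exp (t * X ω)) ν := fun t ht ↦
    hball (by simpa using ht)
  have hhalf : |δ / 2| < δ := by rw [abs_of_pos (half_pos hδ)]; exact half_lt_self hδ
  exact ⟨δ / 2, half_pos hδ,
    integrable_exp_mul_abs (hmem _ hhalf) (hmem _ (by rwa [abs_neg]))⟩

lemma integrable_of_klDiv_ne_top [IsFiniteMeasure μ] [IsFiniteMeasure ν]
    (hμν : InformationTheory.klDiv μ ν ≠ ∞) (h0 : 0 ∈ interior (integrableExpSet X ν)) :
    Integrable X μ := by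
  obtain ⟨hac, hllr⟩ := klDiv_ne_top_iff.1 hμν
  obtain ⟨t, ht, hexp⟩ := exists_pos_integrable_exp_mul_abs h0
  have hklFun : Integrable (fun ω ↦ klFun (μ.rnDeriv ν ω).toReal) ν :=
    (integrable_klFun_rnDeriv_iff hac).2 hllr
  have hmeas : AEStronglyMeasurable X ν :=
    (aemeasurable_of_mem_interior_integrableExpSet h0).aestronglyMeasurable
  rw [← integrable_rnDeriv_smul_iff hac]
  refine ((hklFun.add (hexp.sub (integrable_const 1))).const_mul t⁻¹).mono'
    ((μ.measurable_rnDeriv ν).ennreal_toReal.aestronglyMeasurable.smul hmeas)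
    (.of_forall fun ω ↦ ?_)
  have hp : 0 ≤ (μ.rnDeriv ν ω).toReal := ENNReal.toReal_nonneg
  rw [norm_smul, norm_of_nonneg hp, norm_eq_abs, ← div_eq_inv_mul, le_div_iff₀' ht]
  calc t * ((μ.rnDeriv ν ω).toReal * |X ω|) = (μ.rnDeriv ν ω).toReal * (t * |X ω|) := by ring
    _ ≤ _ := mul_le_klFun_add_exp_sub_one hp _

lemma klDiv_tilted_right_ne_top [IsFiniteMeasure μ] [SigmaFinite ν]
    (hμν : InformationTheory.klDiv μ ν ≠ ∞) (hX : Integrable X μ)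
    (hexp : Integrable (fun ω ↦ exp (X ω)) ν) :
    InformationTheory.klDiv μ (ν.tilted X) ≠ ∞ := by
  obtain ⟨hac, hllr⟩ := klDiv_ne_top_iff.1 hμν
  exact klDiv_ne_top (hac.trans (absolutelyContinuous_tilted hexp))
    (integrable_llr_tilted_right hac hX hllr hexp)

lemma toReal_klDiv_tilted_right [IsProbabilityMeasure μ] [IsProbabilityMeasure ν]
    (hμν : InformationTheory.klDiv μ ν ≠ ∞) (hX : Integrable X μ)
    (hexp : Integrable (fun ω ↦ exp (X ω)) ν) :
    (InformationTheory.klDiv μ (ν.tilted X)).toReal =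
      (InformationTheory.klDiv μ ν).toReal - ∫ ω, X ω ∂μ + log (∫ ω, exp (X ω) ∂ν) := by
  obtain ⟨hac, hllr⟩ := klDiv_ne_top_iff.1 hμν
  have := isProbabilityMeasure_tilted hexp
  rw [toReal_klDiv_of_measure_eq (hac.trans (absolutelyContinuous_tilted hexp)) (by simp),
    toReal_klDiv_of_measure_eq hac (by simp), integral_llr_tilted_right hac hX hexp hllr]

lemma mul_integral_le_toReal_klDiv_add_cgf [IsProbabilityMeasure μ] [IsProbabilityMeasure ν]
    (hμν : InformationTheory.klDiv μ ν ≠ ∞) (hX : Integrable X μ) {t : ℝ}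
    (ht : t ∈ integrableExpSet X ν) :
    t * ∫ ω, X ω ∂μ ≤ (InformationTheory.klDiv μ ν).toReal + cgf X ν t := by
  have h := toReal_klDiv_tilted_right hμν (hX.const_mul t) ht
  rw [integral_const_mul] at h
  have hnonneg : 0 ≤ (InformationTheory.klDiv μ (ν.tilted (t * X ·))).toReal :=
    ENNReal.toReal_nonneg
  rw [cgf, mgf]
  linarith

lemma klDiv_tilted_mul_ne_top [SigmaFinite ν] {t : ℝ}
    (ht : t ∈ interior (integrableExpSet X ν)) :
    InformationTheory.klDiv (ν.tilted (t * X ·)) ν ≠ ∞ := by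
  have hexp : Integrable (fun ω ↦ exp (t * X ω)) ν :=
    integrable_of_mem_integrableExpSet (interior_subset ht)
  have hac := tilted_absolutelyContinuous ν (t * X ·)
  have hX : Integrable X (ν.tilted (t * X ·)) := (memLp_tilted_mul ht 1).integrable le_rfl
  refine klDiv_ne_top hac ((integrable_congr (hac.ae_le (log_rnDeriv_tilted_left_self hexp))).2 ?_)
  exact (hX.const_mul t).sub (integrable_const _)

lemma toReal_klDiv_tilted_mul [IsProbabilityMeasure ν] {t : ℝ}
    (ht : t ∈ interior (integrableExpSet X ν)) :
    (InformationTheory.klDiv (ν.tilted (t * X ·)) ν).toReal =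
      t * deriv (cgf X ν) t - cgf X ν t := by
  have hexp : Integrable (fun ω ↦ exp (t * X ω)) ν :=
    integrable_of_mem_integrableExpSet (interior_subset ht)
  have := isProbabilityMeasure_tilted hexp
  have hX : Integrable X (ν.tilted (t * X ·)) := (memLp_tilted_mul ht 1).integrable le_rfl
  have hself := toReal_klDiv_tilted_right (klDiv_tilted_mul_ne_top ht) (hX.const_mul t) hexp
  rw [klDiv_self, ENNReal.toReal_zero, integral_const_mul, integral_tilted_mul_self ht] at hself
  rw [cgf, mgf]
  linarith

lemma continuousOn_toReal_klDiv_tilted_mul [IsProbabilityMeasure ν] :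
    ContinuousOn (fun t ↦ (InformationTheory.klDiv (ν.tilted (t * X ·)) ν).toReal)
      (interior (integrableExpSet X ν)) := by
  have hcgf : AnalyticOnNhd ℝ (cgf X ν) (interior (integrableExpSet X ν)) := analyticOnNhd_cgf
  exact ((continuousOn_id.mul hcgf.deriv.continuousOn).sub hcgf.continuousOn).congr
    fun t ht ↦ toReal_klDiv_tilted_mul ht

lemma integral_le_of_klDiv_le [IsProbabilityMeasure μ] [IsProbabilityMeasure ν] {δ γ : ℝ}
    (hδ : 0 ≤ δ) (hμν : InformationTheory.klDiv μ ν ≤ ENNReal.ofReal δ) (hX : Integrable X μ)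
    (hγ : 0 < γ) (hexp : γ⁻¹ ∈ integrableExpSet X ν) :
    ∫ ω, X ω ∂μ ≤ γ * δ + γ * cgf X ν γ⁻¹ := by
  have hdv := mul_integral_le_toReal_klDiv_add_cgf
    (ne_top_of_le_ne_top ENNReal.ofReal_ne_top hμν) hX hexp
  have hkl : (InformationTheory.klDiv μ ν).toReal ≤ δ := ENNReal.toReal_le_of_le_ofReal hδ hμν
  calc ∫ ω, X ω ∂μ = γ * (γ⁻¹ * ∫ ω, X ω ∂μ) := (mul_inv_cancel_left₀ hγ.ne' _).symm
    _ ≤ γ * (δ + cgf X ν γ⁻¹) := by gcongr; linarith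
    _ = γ * δ + γ * cgf X ν γ⁻¹ := mul_add _ _ _

-- Either some tilt exhausts the budget `δ`, and then the duality gap vanishes there, or none does,
-- and then the gap is at most `δ / t`.
lemma exists_klDiv_tilted_mul_le_and_dual_le [IsProbabilityMeasure ν]
    (hX : Set.Ici 0 ⊆ interior (integrableExpSet X ν)) {δ η : ℝ} (hδ : 0 < δ) (hη : 0 < η) :
    ∃ t > 0, InformationTheory.klDiv (ν.tilted (t * X ·)) ν ≤ ENNReal.ofReal δ ∧
      t⁻¹ * δ + t⁻¹ * cgf X ν t ≤ ∫ ω, X ω ∂(ν.tilted (t * X ·)) + η := by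
  set K : ℝ → ℝ := fun t ↦ (InformationTheory.klDiv (ν.tilted (t * X ·)) ν).toReal with hK
  suffices ∃ t > 0, K t ≤ δ ∧ δ ≤ K t + t * η by
    obtain ⟨t, ht, hfeas, hgap⟩ := this
    have htX := hX ht.le
    refine ⟨t, ht,
      (ENNReal.le_ofReal_iff_toReal_le (klDiv_tilted_mul_ne_top htX) hδ.le).2 hfeas, ?_⟩
    simp only [hK, toReal_klDiv_tilted_mul htX] at hgap
    rw [integral_tilted_mul_self htX, ← mul_add, inv_mul_le_iff₀ ht]
    linarith
  by_cases hex : ∃ t > 0, δ ≤ K t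
  · obtain ⟨t, ht, hδt⟩ := hex
    have hcont : ContinuousOn K (Set.Icc 0 t) :=
      continuousOn_toReal_klDiv_tilted_mul.mono (Set.Icc_subset_Ici_self.trans hX)
    have hK0 : K 0 = 0 := by simp [hK]
    obtain ⟨s, hs, hKs⟩ := intermediate_value_Icc ht.le hcont ⟨hK0.trans_le hδ.le, hδt⟩
    have hs0 : s ≠ 0 := by rintro rfl; exact hδ.ne' (hKs.symm.trans hK0)
    have hspos : 0 < s := hs.1.lt_of_ne' hs0
    exact ⟨s, hspos, hKs.le, by rw [hKs]; nlinarith⟩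
  · push Not at hex
    refine ⟨δ / η, by positivity, (hex _ (by positivity)).le, ?_⟩
    rw [div_mul_cancel₀ _ hη.ne']
    exact le_add_of_nonneg_left ENNReal.toReal_nonneg

theorem sSup_integral_klDiv_le_eq_sInf_dual [IsProbabilityMeasure ν]
    (hX : Set.Ici 0 ⊆ interior (integrableExpSet X ν)) {δ : ℝ} (hδ : 0 < δ) :
    sSup {r : ℝ | ∃ μ : Measure Ω, IsProbabilityMeasure μ ∧
        InformationTheory.klDiv μ ν ≤ ENNReal.ofReal δ ∧ r = ∫ ω, X ω ∂μ}
      = sInf {r : ℝ | ∃ γ : ℝ, 0 < γ ∧ r = γ * δ + γ * log (∫ ω, exp (X ω / γ) ∂ν)} := by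
  have hcgf (γ : ℝ) : log (∫ ω, exp (X ω / γ) ∂ν) = cgf X ν γ⁻¹ := by
    simp only [cgf, mgf, div_eq_inv_mul]
  simp only [hcgf]
  set P := {r : ℝ | ∃ μ : Measure Ω, IsProbabilityMeasure μ ∧
    InformationTheory.klDiv μ ν ≤ ENNReal.ofReal δ ∧ r = ∫ ω, X ω ∂μ}
  set D := {r : ℝ | ∃ γ : ℝ, 0 < γ ∧ r = γ * δ + γ * cgf X ν γ⁻¹}
  have hweak : ∀ p ∈ P, ∀ d ∈ D, p ≤ d := by
    rintro _ ⟨μ, _, hμ, rfl⟩ _ ⟨γ, hγ, rfl⟩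
    refine integral_le_of_klDiv_le hδ.le hμ ?_ hγ (interior_subset (hX (inv_pos.2 hγ).le))
    exact integrable_of_klDiv_ne_top (ne_top_of_le_ne_top ENNReal.ofReal_ne_top hμ)
      (hX Set.self_mem_Ici)
  have hstrong (η : ℝ) (hη : 0 < η) : ∃ p ∈ P, ∃ d ∈ D, d ≤ p + η := by
    obtain ⟨t, ht, hfeas, hgap⟩ := exists_klDiv_tilted_mul_le_and_dual_le hX hδ hη
    have hexp : Integrable (fun ω ↦ exp (t * X ω)) ν :=
      integrable_of_mem_integrableExpSet (interior_subset (hX ht.le))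
    exact ⟨_, ⟨_, isProbabilityMeasure_tilted hexp, hfeas, rfl⟩,
      _, ⟨t⁻¹, inv_pos.2 ht, by rw [inv_inv]⟩, hgap⟩
  obtain ⟨p₀, hp₀, d₀, hd₀, -⟩ := hstrong 1 one_pos
  refine le_antisymm (csSup_le ⟨p₀, hp₀⟩ fun p hp ↦ le_csInf ⟨d₀, hd₀⟩ (hweak p hp))
    (le_of_forall_pos_le_add fun η hη ↦ ?_)
  obtain ⟨p, hp, d, hd, hdp⟩ := hstrong η hη
  calc sInf D ≤ d := csInf_le ⟨p₀, hweak p₀ hp₀⟩ hd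
    _ ≤ p + η := hdp
    _ ≤ sSup P + η := by gcongr; exact le_csSup ⟨d₀, fun q hq ↦ hweak q hq d₀ hd₀⟩ hp

end KLDuality

section GammaMixture

variable {Q : Measure ℝ} {k a b θ θ' : ℝ}

lemma klDiv_gammaMeasure_ne_top_of_rate [IsFiniteMeasure Q] (hk : 0 < k) (hθ : 0 < θ)
    (hθ' : 0 < θ') (hQ : InformationTheory.klDiv Q (gammaMeasure k θ) ≠ ∞) :
    InformationTheory.klDiv Q (gammaMeasure k θ') ≠ ∞ := by
  have := isProbabilityMeasure_gammaMeasure hk hθ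
  have hs : θ - θ' < θ := sub_lt_self θ hθ'
  have hid := integrable_of_klDiv_ne_top hQ
    (zero_mem_interior_integrableExpSet_id_gammaMeasure hk hθ)
  have htilt := gammaMeasure_tilted_mul hk hθ hs
  rw [sub_sub_cancel] at htilt
  rw [← htilt]
  exact klDiv_tilted_right_ne_top hQ (hid.const_mul _) (integrable_exp_mul_gammaMeasure hk hθ hs)

lemma toReal_klDiv_gammaMeasure_rate [IsProbabilityMeasure Q] (hk : 0 < k) (hθ : 0 < θ)
    (hθ' : 0 < θ') (hQ : InformationTheory.klDiv Q (gammaMeasure k θ) ≠ ∞) :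
    (InformationTheory.klDiv Q (gammaMeasure k θ')).toReal =
      (InformationTheory.klDiv Q (gammaMeasure k θ)).toReal +
        ((θ' - θ) * ∫ x, x ∂Q + k * (log θ - log θ')) := by
  have := isProbabilityMeasure_gammaMeasure hk hθ
  have hs : θ - θ' < θ := sub_lt_self θ hθ'
  have hid := integrable_of_klDiv_ne_top hQ
    (zero_mem_interior_integrableExpSet_id_gammaMeasure hk hθ)
  have htilt := gammaMeasure_tilted_mul hk hθ hs
  rw [sub_sub_cancel] at htilt
  rw [← htilt, toReal_klDiv_tilted_right hQ (hid.const_mul _)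
    (integrable_exp_mul_gammaMeasure hk hθ hs), integral_const_mul,
    integral_exp_mul_gammaMeasure hk hθ hs, sub_sub_cancel, log_rpow (by positivity),
    log_div hθ.ne' hθ'.ne']
  ring

lemma integrable_id_sub_add_log_gammaMeasure (ha : 0 < a) (hb : 0 < b) (c d k m : ℝ) :
    Integrable (fun θ ↦ (θ - c) * m + k * (d - log θ)) (gammaMeasure a b) := by
  have := isProbabilityMeasure_gammaMeasure ha hb
  exact (((integrable_id_gammaMeasure ha hb).sub (integrable_const c)).mul_const m).add
    (((integrable_const d).sub (integrable_log_gammaMeasure ha hb)).const_mul k)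

lemma integral_id_sub_add_log_gammaMeasure (ha : 0 < a) (hb : 0 < b) (c d k m : ℝ) :
    ∫ θ, ((θ - c) * m + k * (d - log θ)) ∂gammaMeasure a b =
      (a / b - c) * m + k * (d - (digamma a - log b)) := by
  have := isProbabilityMeasure_gammaMeasure ha hb
  have hid := integrable_id_gammaMeasure ha hb
  have hlog := integrable_log_gammaMeasure ha hb
  have hid' : Integrable (fun θ ↦ (θ - c) * m) (gammaMeasure a b) :=
    (hid.sub (integrable_const c)).mul_const m
  have hlog' : Integrable (fun θ ↦ k * (d - log θ)) (gammaMeasure a b) :=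
    ((integrable_const d).sub hlog).const_mul k
  rw [integral_add hid' hlog', integral_mul_const, integral_const_mul,
    integral_sub hid (integrable_const c), integral_sub (integrable_const d) hlog,
    integral_id_gammaMeasure ha hb, integral_log_gammaMeasure ha hb]
  simp only [integral_const, probReal_univ, one_smul]

lemma lintegral_klDiv_gammaMeasure_of_ne_top [IsProbabilityMeasure Q] (hk : 0 < k) (ha : 0 < a)
    (hb : 0 < b) (hQ : InformationTheory.klDiv Q (gammaMeasure k (a / b)) ≠ ∞) :
    ∫⁻ θ, InformationTheory.klDiv Q (gammaMeasure k θ) ∂gammaMeasure a b =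
      InformationTheory.klDiv Q (gammaMeasure k (a / b)) +
        ENNReal.ofReal (k * (log a - digamma a)) := by
  have := isProbabilityMeasure_gammaMeasure ha hb
  have hab : 0 < a / b := div_pos ha hb
  set K := (InformationTheory.klDiv Q (gammaMeasure k (a / b))).toReal
  set g : ℝ → ℝ := fun θ ↦ (θ - a / b) * ∫ x, x ∂Q + k * (log (a / b) - log θ)
  have hkl (θ : ℝ) (hθ : 0 < θ) :
      (InformationTheory.klDiv Q (gammaMeasure k θ)).toReal = K + g θ :=
    toReal_klDiv_gammaMeasure_rate hk hab hθ hQ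
  have hg : Integrable g (gammaMeasure a b) :=
    integrable_id_sub_add_log_gammaMeasure ha hb _ _ _ _
  have hpos := gammaMeasure_ae_pos a b
  calc ∫⁻ θ, InformationTheory.klDiv Q (gammaMeasure k θ) ∂gammaMeasure a b
      = ∫⁻ θ, ENNReal.ofReal (K + g θ) ∂gammaMeasure a b := by
        refine lintegral_congr_ae (hpos.mono fun θ hθ ↦ ?_)
        have hne := klDiv_gammaMeasure_ne_top_of_rate hk hab hθ hQ
        simp only [← hkl θ hθ, ENNReal.ofReal_toReal hne]
    _ = ENNReal.ofReal (∫ θ, (K + g θ) ∂gammaMeasure a b) := by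
        refine (ofReal_integral_eq_lintegral_ofReal ((integrable_const K).add hg)
          (hpos.mono fun θ hθ ↦ ?_)).symm
        exact ENNReal.toReal_nonneg.trans_eq (hkl θ hθ)
    _ = ENNReal.ofReal (K + k * (log a - digamma a)) := by
        rw [integral_add (integrable_const K) hg,
          integral_id_sub_add_log_gammaMeasure ha hb, integral_const, probReal_univ, one_smul,
          log_div ha.ne' hb.ne']
        ring_nf
    _ = _ := by
        rw [ENNReal.ofReal_add ENNReal.toReal_nonneg
          (mul_nonneg hk.le (sub_nonneg.2 (digamma_le_log ha))), ENNReal.ofReal_toReal hQ]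

lemma lintegral_klDiv_gammaMeasure [IsProbabilityMeasure Q] (hk : 0 < k) (ha : 0 < a)
    (hb : 0 < b) :
    ∫⁻ θ, klDiv Q (gammaMeasure k θ) ∂gammaMeasure a b =
      InformationTheory.klDiv Q (gammaMeasure k (a / b)) +
        ENNReal.ofReal (k * (log a - digamma a)) := by
  have hpos := gammaMeasure_ae_pos a b
  have heq : ∫⁻ θ, klDiv Q (gammaMeasure k θ) ∂gammaMeasure a b =
      ∫⁻ θ, InformationTheory.klDiv Q (gammaMeasure k θ) ∂gammaMeasure a b := by
    refine lintegral_congr_ae (hpos.mono fun θ hθ ↦ ?_)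
    have := isProbabilityMeasure_gammaMeasure hk hθ
    exact klDiv_eq_informationTheory_klDiv
  rw [heq]
  by_cases hQ : InformationTheory.klDiv Q (gammaMeasure k (a / b)) = ∞
  · have := isProbabilityMeasure_gammaMeasure ha hb
    have htop : ∀ᵐ θ ∂gammaMeasure a b, InformationTheory.klDiv Q (gammaMeasure k θ) = ∞ :=
      hpos.mono fun θ hθ ↦ not_not.1 fun hne ↦
        klDiv_gammaMeasure_ne_top_of_rate hk hθ (div_pos ha hb) hne hQ
    rw [lintegral_congr_ae htop, hQ]
    simp
  · exact lintegral_klDiv_gammaMeasure_of_ne_top hk ha hb hQ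

lemma Iio_zero_and_lintegral_klDiv_gammaMeasure_le_iff [IsProbabilityMeasure Q] (hk : 0 < k)
    (ha : 0 < a) (hb : 0 < b) {ε : ℝ} (hε : k * (log a - digamma a) ≤ ε) :
    (Q (Set.Iio 0) = 0 ∧
        ∫⁻ θ, klDiv Q (gammaMeasure k θ) ∂gammaMeasure a b ≤ ENNReal.ofReal ε) ↔
      InformationTheory.klDiv Q (gammaMeasure k (a / b)) ≤
        ENNReal.ofReal (ε - k * (log a - digamma a)) := by
  set c := k * (log a - digamma a)
  have hc : 0 ≤ c := mul_nonneg hk.le (sub_nonneg.2 (digamma_le_log ha))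
  rw [lintegral_klDiv_gammaMeasure hk ha hb, ENNReal.ofReal_sub ε hc]
  have hle := ENNReal.ofReal_le_ofReal hε
  rw [ENNReal.le_sub_iff_add_le_right ENNReal.ofReal_ne_top hle, and_iff_right_iff_imp]
  intro hQ
  have hfin : InformationTheory.klDiv Q (gammaMeasure k (a / b)) ≠ ∞ :=
    ne_top_of_le_ne_top ENNReal.ofReal_ne_top (le_self_add.trans hQ)
  have hac : Q ≪ gammaMeasure k (a / b) := (InformationTheory.klDiv_ne_top_iff.1 hfin).1
  have hpos : ∀ᵐ x ∂Q, x ∉ Set.Iio 0 :=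
    hac.ae_le ((gammaMeasure_ae_pos k (a / b)).mono fun x hx ↦ hx.not_gt)
  exact measure_eq_zero_iff_ae_notMem.2 hpos

end GammaMixture

lemma integrableExpSet_eq_univ_of_bounded {Ω : Type*} [MeasurableSpace Ω] {ν : Measure Ω}
    [IsFiniteMeasure ν] {X : Ω → ℝ} (hX : AEMeasurable X ν) {C : ℝ} (hC : ∀ ω, |X ω| ≤ C) :
    integrableExpSet X ν = Set.univ :=
  Set.eq_univ_of_forall fun _ ↦ integrable_exp_mul_of_mem_Icc hX
    (.of_forall fun ω ↦ abs_le.1 (hC ω))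

theorem dro_bas_dual_exponential_gamma_general {k αₙ βₙ ε : ℝ} {f : ℝ → ℝ}
    (hk : 0 < k) (hα : 0 < αₙ) (hβ : 0 < βₙ)
    (hf : Set.Ici 0 ⊆ interior (integrableExpSet f (gammaMeasure k (αₙ / βₙ))))
    (hε : k * (log αₙ - digamma αₙ) < ε) :
    sSup {r : ℝ | ∃ Q : Measure ℝ, IsProbabilityMeasure Q ∧ Q (Set.Iio 0) = 0 ∧
        (∫⁻ θ, klDiv Q (gammaMeasure k θ) ∂(gammaMeasure αₙ βₙ)) ≤ ENNReal.ofReal ε ∧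
        r = ∫ ξ, f ξ ∂Q}
      = sInf {r : ℝ | ∃ γ : ℝ, 0 < γ ∧
          r = γ * (ε - k * (log αₙ - digamma αₙ))
            + γ * log (∫ ξ, exp (f ξ / γ) ∂(gammaMeasure k (αₙ / βₙ)))} := by
  have := isProbabilityMeasure_gammaMeasure hk (div_pos hα hβ)
  rw [← sSup_integral_klDiv_le_eq_sInf_dual hf (sub_pos.2 hε)]
  refine congrArg sSup (Set.ext fun r ↦ exists_congr fun Q ↦ and_congr_right fun _ ↦ ?_)
  rw [← Iio_zero_and_lintegral_klDiv_gammaMeasure_le_iff hk hα hβ hε.le, and_assoc]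

theorem dro_bas_dual_exponential_gamma
    (αₙ βₙ : ℝ) (hα : 0 < αₙ) (hβ : 0 < βₙ)
    (f : ℝ → ℝ) (hf_meas : Measurable f) (hf_bdd : ∃ C : ℝ, ∀ x, |f x| ≤ C)
    (ε : ℝ) (hε : Real.log αₙ - digamma αₙ < ε) :
    sSup {r : ℝ | ∃ Q : Measure ℝ, IsProbabilityMeasure Q ∧ Q (Set.Iio 0) = 0 ∧
        (∫⁻ θ, klDiv Q (expMeasure θ) ∂(gammaMeasure αₙ βₙ)) ≤ ENNReal.ofReal ε ∧
        r = ∫ ξ, f ξ ∂Q}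
      = sInf {r : ℝ | ∃ γ : ℝ, 0 < γ ∧
          r = γ * (ε - (Real.log αₙ - digamma αₙ))
            + γ * Real.log (∫ ξ, Real.exp (f ξ / γ) ∂(expMeasure (αₙ / βₙ)))} := by
  have := isProbabilityMeasure_gammaMeasure one_pos (div_pos hα hβ)
  obtain ⟨C, hC⟩ := hf_bdd
  have hf : Set.Ici 0 ⊆ interior (integrableExpSet f (gammaMeasure 1 (αₙ / βₙ))) := by
    simp [integrableExpSet_eq_univ_of_bounded hf_meas.aemeasurable hC]
  simpa only [one_mul, expMeasure] using
    dro_bas_dual_exponential_gamma_general one_pos hα hβ hf (by rwa [one_mul])
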